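/- Let G be a finite simple undirected connected graph with node set {1,…,n} and edge set of cardinality p, with oriented incidence matrix D ∈ ℝ^{n×p}. Let ν₁,…,ν_{n+1} ∈ ℝ with Ψ = diag(ν₁,…,νₙ), let ᾱ_k > 0 for each edge k with Λ = diag(1/ᾱ₁,…,1/ᾱ_p), and suppose that for every edge k of G with end nodes i and j: 1/ᾱ_k + ν_i + ν_j − (r_i − 1)|ν_i| − (r_j − 1)|ν_j| > 0, where r_i is the degree of node i in G. Fix a node c ∈ {1,…,n} with ν_c ≠ 0 and at least one neighbour, let ᾱ_{new} > 0, and define γ := min over neighbours j of c in G of [1/ᾱ_{cj} + ν_c + ν_j − (r_c − 1)|ν_c| − (r_j − 1)|ν_j|]/|ν_c|, where ᾱ_{cj} is the bound associated with the edge joining c and j. Suppose γ(1/ᾱ_{new} + ν_{n+1} + ν_c) − r_c|ν_c| > 0. Define D_new ∈ ℝ^{(n+1)×(p+1)} as the block matrix [[D, Υ],[0ᵀ, 1]], where Υ ∈ ℝ^{n×1} has entry −1 in row c and 0 elsewhere, and let Ψ_new = diag(Ψ, ν_{n+1}) and Λ_new = diag(Λ, 1/ᾱ_{new}). Then D_newᵀ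 Ψ_new D_new + Λ_new is positive definite. -/

import Mathlib

/-!
Write `x = (y, z)` with `z` the coordinate of the new edge, and let `s_i = (D y)_i`. The quadratic
form equals `∑ ν_i s_i² + ∑ y_k² / ᾱ_k - 2 ν_c s_c z + β z²` with `β = 1/ᾱ_new + ν_{n+1} + ν_c`.

Each `s_i` is a signed sum of the `r_i` numbers `y_k` over the edges `k` at `i`, so
`ν_i s_i² ≥ (ν_i - (r_i - 1)|ν_i|) ∑_{k ∋ i} y_k²` (`weighted_sq_sum_ge`). Exchanging the sums over
nodes and edges (`OGraph.sum_incident`) bounds the first two terms from below by `∑ m_k y_k²`, where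
`m_k > 0` is the left-hand side of the edge condition (`OGraph.edge_form_ge`).

If `z = 0` this suffices. If `z ≠ 0`, then `m_k ≥ γ|ν_c|` on the edges at `c` and
`s_c² ≤ r_c ∑_{k ∋ c} y_k²`, so the form is at least
`γ|ν_c| Q - 2 ν_c s_c z + β z²` with `s_c² ≤ r_c Q`, and this is positive because `γ β > r_c |ν_c|`.
-/

open Matrix

/-- A finite simple undirected graph with an orientation assigned to each edge:
`pEnd e` is the positive end node of edge `e` and `nEnd e` its negative end node. -/
structure OGraph (V : Type*) (E : Type*) where
  pEnd : E → V
  nEnd : E → V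
  ends_ne : ∀ e, pEnd e ≠ nEnd e
  simple : ∀ e f, e ≠ f → ({pEnd e, nEnd e} : Set V) ≠ {pEnd f, nEnd f}

/-- The oriented incidence matrix. -/
def OGraph.incMatrix {V E : Type*} [DecidableEq V] (G : OGraph V E) : Matrix V E ℝ :=
  Matrix.of fun i e => if G.pEnd e = i then 1 else if G.nEnd e = i then -1 else 0

/-- The set `L_i^± = L_i^+ ∪ L_i^-` of edges incident to node `i`. -/
def OGraph.incident {V E : Type*} [DecidableEq V] [Fintype E]
    (G : OGraph V E) (i : V) : Finset E :=
  Finset.univ.filter fun e => G.pEnd e = i ∨ G.nEnd e = i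

/-- The end node of edge `e` other than `i`. -/
def OGraph.otherEnd {V E : Type*} [DecidableEq V] (G : OGraph V E) (i : V) (e : E) : V :=
  if G.pEnd e = i then G.nEnd e else G.pEnd e

/-- The underlying simple graph of an oriented graph. -/
def OGraph.toSimpleGraph {V E : Type*} (G : OGraph V E) : SimpleGraph V :=
  SimpleGraph.fromRel fun i j => ∃ e, G.pEnd e = i ∧ G.nEnd e = j

/-- The incidence matrix `D_new = [[D, Υ], [0ᵀ, 1]]` of the graph obtained by joining a new
node `n+1` (positive end) to the node `c` (negative end) by a single new edge. -/
noncomputable def augIncMatrix {n p : ℕ} (G : OGraph (Fin n) (Fin p)) (c : Fin n) :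
    Matrix (Fin (n + 1)) (Fin (p + 1)) ℝ :=
  Matrix.of fun i k =>
    if hi : (i : ℕ) < n then
      if hk : (k : ℕ) < p then G.incMatrix ⟨i, hi⟩ ⟨k, hk⟩
      else if (⟨i, hi⟩ : Fin n) = c then -1 else 0
    else
      if (k : ℕ) < p then 0 else 1

/-- Weighted form of `(2 - r) ∑ f² ≤ (∑ f)² ≤ r ∑ f²`, with `r` the number of summands: the lower
bound serves `v ≥ 0` and the upper bound `v < 0`. -/
lemma weighted_sq_sum_ge {ι : Type*} (S : Finset ι) (f : ι → ℝ) (v : ℝ) :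
    (v - ((S.card : ℝ) - 1) * |v|) * ∑ k ∈ S, f k ^ 2 ≤ v * (∑ k ∈ S, f k) ^ 2 := by
  have hQ : 0 ≤ ∑ k ∈ S, f k ^ 2 := Finset.sum_nonneg fun k _ => sq_nonneg _
  rcases le_or_gt 0 v with hv | hv
  · have hlow : (2 - (S.card : ℝ)) * ∑ k ∈ S, f k ^ 2 ≤ (∑ k ∈ S, f k) ^ 2 := by
      -- For at least two summands the left side is nonpositive; otherwise equality holds.
      rcases Nat.lt_or_ge S.card 2 with h | h
      · rcases (show S.card = 0 ∨ S.card = 1 by omega) with h | h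
        · rw [Finset.card_eq_zero] at h
          simp [h]
        · obtain ⟨a, rfl⟩ := Finset.card_eq_one.mp h
          simp only [Finset.card_singleton, Finset.sum_singleton]
          norm_num
      · have h' : (2 : ℝ) ≤ S.card := by exact_mod_cast h
        nlinarith [sq_nonneg (∑ k ∈ S, f k)]
    rw [abs_of_nonneg hv]
    nlinarith
  · have hup := sq_sum_le_card_mul_sum_sq (s := S) (f := f)
    rw [abs_of_neg hv]
    nlinarith

/-- Summing over nodes and their incident edges visits each edge once from each of its ends. -/
lemma OGraph.sum_incident {n p : ℕ} (G : OGraph (Fin n) (Fin p)) (w : Fin n → ℝ)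
    (g : Fin p → ℝ) :
    ∑ i, w i * ∑ k ∈ G.incident i, g k = ∑ k, (w (G.pEnd k) + w (G.nEnd k)) * g k := by
  simp only [OGraph.incident, Finset.sum_filter, Finset.mul_sum]
  rw [Finset.sum_comm]
  refine Finset.sum_congr rfl fun k _ => ?_
  have h : ∀ i, (w i * if G.pEnd k = i ∨ G.nEnd k = i then g k else 0)
      = (if G.pEnd k = i then w i * g k else 0) + (if G.nEnd k = i then w i * g k else 0) := by
    intro i
    have := G.ends_ne k
    by_cases h1 : G.pEnd k = i <;> by_cases h2 : G.nEnd k = i <;> simp [h1, h2]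
    exact absurd (h1.trans h2.symm) this
  simp only [h, Finset.sum_add_distrib, Finset.sum_ite_eq, Finset.mem_univ, if_true]
  ring

lemma OGraph.incMatrix_mulVec {n p : ℕ} (G : OGraph (Fin n) (Fin p)) (y : Fin p → ℝ)
    (i : Fin n) : (G.incMatrix *ᵥ y) i = ∑ k ∈ G.incident i, G.incMatrix i k * y k := by
  rw [Matrix.mulVec, dotProduct, OGraph.incident, Finset.sum_filter]
  refine Finset.sum_congr rfl fun k _ => ?_
  by_cases h1 : G.pEnd k = i <;> by_cases h2 : G.nEnd k = i <;> simp [OGraph.incMatrix, h1, h2]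

lemma OGraph.sum_incMatrix_sq {n p : ℕ} (G : OGraph (Fin n) (Fin p)) (y : Fin p → ℝ)
    (i : Fin n) :
    ∑ k ∈ G.incident i, (G.incMatrix i k * y k) ^ 2 = ∑ k ∈ G.incident i, y k ^ 2 := by
  refine Finset.sum_congr rfl fun k hk => ?_
  rw [OGraph.incident, Finset.mem_filter] at hk
  by_cases h1 : G.pEnd k = i
  · simp [OGraph.incMatrix, h1]
  · simp [OGraph.incMatrix, h1, hk.2.resolve_left h1]

/-- The left-hand side `m_k` of the edge condition, the diagonal-dominance margin of edge `k`. -/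
noncomputable def OGraph.margin {n p : ℕ} (G : OGraph (Fin n) (Fin p)) (ν : Fin n → ℝ)
    (αhi : Fin p → ℝ) (k : Fin p) : ℝ :=
  1 / αhi k + ν (G.pEnd k) + ν (G.nEnd k)
    - (((G.incident (G.pEnd k)).card : ℝ) - 1) * |ν (G.pEnd k)|
    - (((G.incident (G.nEnd k)).card : ℝ) - 1) * |ν (G.nEnd k)|

lemma OGraph.edge_form_ge {n p : ℕ} (G : OGraph (Fin n) (Fin p)) (ν : Fin n → ℝ)
    (αhi : Fin p → ℝ) (y : Fin p → ℝ) :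
    ∑ k, G.margin ν αhi k * y k ^ 2
      ≤ ∑ i, ν i * (G.incMatrix *ᵥ y) i ^ 2 + ∑ k, 1 / αhi k * y k ^ 2 := by
  have h1 : ∑ i, (ν i - (((G.incident i).card : ℝ) - 1) * |ν i|) * ∑ k ∈ G.incident i, y k ^ 2
      ≤ ∑ i, ν i * (G.incMatrix *ᵥ y) i ^ 2 := by
    refine Finset.sum_le_sum fun i _ => ?_
    rw [G.incMatrix_mulVec, ← G.sum_incMatrix_sq]
    exact weighted_sq_sum_ge _ _ _
  rw [G.sum_incident (fun i => ν i - (((G.incident i).card : ℝ) - 1) * |ν i|)] at h1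
  refine le_trans (le_of_eq ?_) (add_le_add_left h1 _)
  rw [← Finset.sum_add_distrib]
  refine Finset.sum_congr rfl fun k _ => ?_
  rw [OGraph.margin]
  ring

lemma quadForm_eq {m q : ℕ} (D : Matrix (Fin m) (Fin q) ℝ) (a : Fin m → ℝ) (b x : Fin q → ℝ) :
    x ⬝ᵥ ((Dᵀ * Matrix.diagonal a * D + Matrix.diagonal b) *ᵥ x)
      = ∑ i, a i * (D *ᵥ x) i ^ 2 + ∑ k, b k * x k ^ 2 := by
  rw [Matrix.add_mulVec, dotProduct_add]
  congr 1
  · rw [← Matrix.mulVec_mulVec, ← Matrix.mulVec_mulVec, Matrix.dotProduct_mulVec,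
      Matrix.vecMul_transpose, dotProduct]
    refine Finset.sum_congr rfl fun i _ => ?_
    rw [Matrix.mulVec_diagonal]
    ring
  · rw [dotProduct]
    refine Finset.sum_congr rfl fun i _ => ?_
    rw [Matrix.mulVec_diagonal]
    ring

lemma augIncMatrix_mulVec_castSucc {n p : ℕ} (G : OGraph (Fin n) (Fin p)) (c : Fin n)
    (x : Fin (p + 1) → ℝ) (i : Fin n) :
    (augIncMatrix G c *ᵥ x) i.castSucc
      = (G.incMatrix *ᵥ fun k => x k.castSucc) i - if i = c then x (Fin.last p) else 0 := by
  rw [Matrix.mulVec, dotProduct, Fin.sum_univ_castSucc, Matrix.mulVec, dotProduct]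
  by_cases h : i = c <;> simp [augIncMatrix, h, sub_eq_add_neg]

lemma augIncMatrix_mulVec_last {n p : ℕ} (G : OGraph (Fin n) (Fin p)) (c : Fin n)
    (x : Fin (p + 1) → ℝ) :
    (augIncMatrix G c *ᵥ x) (Fin.last n) = x (Fin.last p) := by
  rw [Matrix.mulVec, dotProduct, Fin.sum_univ_castSucc]
  simp [augIncMatrix]

lemma augForm_eq {n p : ℕ} (G : OGraph (Fin n) (Fin p)) (c : Fin n) (ν : Fin n → ℝ)
    (νnew : ℝ) (b : Fin p → ℝ) (bnew : ℝ) (x : Fin (p + 1) → ℝ) :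
    x ⬝ᵥ (((augIncMatrix G c)ᵀ * Matrix.diagonal (Fin.snoc ν νnew) * augIncMatrix G c
          + Matrix.diagonal (Fin.snoc b bnew)) *ᵥ x)
      = ∑ i, ν i * (G.incMatrix *ᵥ fun k => x k.castSucc) i ^ 2
        + ∑ k : Fin p, b k * x k.castSucc ^ 2
        - 2 * ν c * (G.incMatrix *ᵥ fun k => x k.castSucc) c * x (Fin.last p)
        + (bnew + νnew + ν c) * x (Fin.last p) ^ 2 := by
  rw [quadForm_eq, Fin.sum_univ_castSucc, Fin.sum_univ_castSucc]
  simp only [Fin.snoc_castSucc, Fin.snoc_last, augIncMatrix_mulVec_castSucc,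
    augIncMatrix_mulVec_last]
  set s := G.incMatrix *ᵥ fun k => x k.castSucc
  set z := x (Fin.last p)
  have h : ∀ i, ν i * (s i - if i = c then z else 0) ^ 2
      = ν i * s i ^ 2 + if i = c then - 2 * ν i * s i * z + ν i * z ^ 2 else 0 := by
    intro i
    split_ifs <;> ring
  simp only [h, Finset.sum_add_distrib, Finset.sum_ite_eq', Finset.mem_univ, if_true]
  ring

/-- Theorem 1, matrix part: under the edge conditions on the original graph,
`ν_c ≠ 0`, the interface condition `γ(1/ᾱ_new + ν_{n+1} + ν_c) - r_c|ν_c| > 0` with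
`γ = min_{j ∈ N_c} [1/ᾱ_{cj} + ν_c + ν_j - (r_c-1)|ν_c| - (r_j-1)|ν_j|]/|ν_c|`,
the matrix `D_newᵀ Ψ_new D_new + Λ_new` is positive definite. -/
theorem stmt9 {n p : ℕ} (G : OGraph (Fin n) (Fin p))
    (hconn : G.toSimpleGraph.Connected)
    (ν : Fin n → ℝ) (νnew : ℝ) (αhi : Fin p → ℝ) (hαhi : ∀ k, 0 < αhi k)
    (hedge : ∀ k : Fin p,
      0 < 1 / αhi k + ν (G.pEnd k) + ν (G.nEnd k)
        - (((G.incident (G.pEnd k)).card : ℝ) - 1) * |ν (G.pEnd k)|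
        - (((G.incident (G.nEnd k)).card : ℝ) - 1) * |ν (G.nEnd k)|)
    (c : Fin n) (hνc : ν c ≠ 0) (hcne : (G.incident c).Nonempty)
    (αnew : ℝ) (hαnew : 0 < αnew)
    (γ : ℝ)
    (hγ : γ = sInf ((fun l =>
        (1 / αhi l + ν c + ν (G.otherEnd c l)
          - (((G.incident c).card : ℝ) - 1) * |ν c|
          - (((G.incident (G.otherEnd c l)).card : ℝ) - 1) * |ν (G.otherEnd c l)|)
        / |ν c|) '' ↑(G.incident c)))
    (hint : 0 < γ * (1 / αnew + νnew + ν c) - ((G.incident c).card : ℝ) * |ν c|) :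
    ∀ x : Fin (p + 1) → ℝ, x ≠ 0 →
      0 < x ⬝ᵥ (((augIncMatrix G c)ᵀ * Matrix.diagonal (Fin.snoc ν νnew) * augIncMatrix G c
          + Matrix.diagonal (Fin.snoc (fun k => 1 / αhi k) (1 / αnew))).mulVec x) := by
  intro x hx
  rw [augForm_eq]
  have hm : ∀ k, 0 < G.margin ν αhi k := hedge
  have hform := G.edge_form_ge ν αhi fun k => x k.castSucc
  have hnn : ∀ k : Fin p, 0 ≤ G.margin ν αhi k * x k.castSucc ^ 2 :=
    fun k => mul_nonneg (hm k).le (sq_nonneg _)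
  by_cases hz : x (Fin.last p) = 0
  · obtain ⟨k, hk⟩ : ∃ k : Fin p, x k.castSucc ≠ 0 := by
      by_contra! h
      exact hx (funext fun j => Fin.lastCases hz h j)
    have hpos : 0 < ∑ k : Fin p, G.margin ν αhi k * x k.castSucc ^ 2 :=
      Finset.sum_pos' (fun k _ => hnn k)
        ⟨k, Finset.mem_univ k, mul_pos (hm k) (by positivity)⟩
    rw [hz]
    linarith
  · have hv : 0 < |ν c| := abs_pos.mpr hνc
    have hset : (fun l =>
        (1 / αhi l + ν c + ν (G.otherEnd c l)
          - (((G.incident c).card : ℝ) - 1) * |ν c|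
          - (((G.incident (G.otherEnd c l)).card : ℝ) - 1) * |ν (G.otherEnd c l)|)
        / |ν c|) '' ↑(G.incident c)
        = (fun l => G.margin ν αhi l / |ν c|) '' ↑(G.incident c) := by
      refine Set.image_congr fun l hl => ?_
      congr 1
      rw [Finset.mem_coe, OGraph.incident, Finset.mem_filter] at hl
      by_cases h : G.pEnd l = c
      · simp only [OGraph.margin, OGraph.otherEnd, h, if_true]
      · simp only [OGraph.margin, OGraph.otherEnd, h, if_false, hl.2.resolve_left h]
        ring
    have hfin : ((fun l => G.margin ν αhi l / |ν c|) ''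
        (↑(G.incident c) : Set (Fin p))).Finite := (Finset.finite_toSet _).image _
    rw [hset] at hγ
    have hγpos : 0 < γ := by
      obtain ⟨l, -, hl⟩ := (hcne.to_set.image fun l => G.margin ν αhi l / |ν c|).csInf_mem hfin
      rw [hγ, ← hl]
      exact div_pos (hm l) hv
    have hγle : ∀ l ∈ G.incident c, γ * |ν c| ≤ G.margin ν αhi l := by
      intro l hl
      rw [← le_div_iff₀ hv, hγ]
      exact csInf_le hfin.bddBelow ⟨l, hl, rfl⟩
    have hQ : γ * |ν c| * ∑ k ∈ G.incident c, x k.castSucc ^ 2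
        ≤ ∑ k : Fin p, G.margin ν αhi k * x k.castSucc ^ 2 := by
      rw [Finset.mul_sum]
      exact (Finset.sum_le_sum fun k hk =>
        mul_le_mul_of_nonneg_right (hγle k hk) (sq_nonneg _)).trans
        (Finset.sum_le_sum_of_subset_of_nonneg (Finset.subset_univ _) fun k _ _ => hnn k)
    have hs : (G.incMatrix *ᵥ fun k => x k.castSucc) c ^ 2
        ≤ ((G.incident c).card : ℝ) * ∑ k ∈ G.incident c, x k.castSucc ^ 2 := by
      rw [G.incMatrix_mulVec, ← G.sum_incMatrix_sq fun k => x k.castSucc]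
      exact sq_sum_le_card_mul_sum_sq
    have hr : (0 : ℝ) < (G.incident c).card := by exact_mod_cast hcne.card_pos
    set s := (G.incMatrix *ᵥ fun k => x k.castSucc) c
    set z := x (Fin.last p)
    set Q := ∑ k ∈ G.incident c, x k.castSucc ^ 2
    set r : ℝ := ((G.incident c).card : ℝ)
    set β := 1 / αnew + νnew + ν c
    have hz2 : 0 < z ^ 2 := by positivity
    -- After multiplication by `r γ`, the form dominates `|ν_c| (γ |s| - r |z|)²`.
    have hcross : 2 * ν c * s * z ≤ 2 * |ν c| * |s| * |z| := by
      calc 2 * ν c * s * z = 2 * (ν c * s * z) := by ring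
        _ ≤ 2 * |ν c * s * z| := by linarith [le_abs_self (ν c * s * z)]
        _ = 2 * |ν c| * |s| * |z| := by rw [abs_mul, abs_mul]; ring
    have h1 : 0 ≤ |ν c| * (γ * |s| - r * |z|) ^ 2 := by positivity
    have h2 : γ ^ 2 * |ν c| * s ^ 2 ≤ γ ^ 2 * |ν c| * (r * Q) :=
      mul_le_mul_of_nonneg_left hs (by positivity)
    have h3 : 0 < r * ((γ * β - r * |ν c|) * z ^ 2) := mul_pos hr (mul_pos hint hz2)
    have h4 : r * γ * (2 * ν c * s * z) ≤ r * γ * (2 * |ν c| * |s| * |z|) :=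
      mul_le_mul_of_nonneg_left hcross (by positivity)
    have h5 : 0 < r * γ * (γ * |ν c| * Q - 2 * ν c * s * z + β * z ^ 2) := by
      have e : |ν c| * (γ * |s| - r * |z|) ^ 2
          = γ ^ 2 * |ν c| * s ^ 2 - r * γ * (2 * |ν c| * |s| * |z|) + r ^ 2 * |ν c| * z ^ 2 := by
        rw [← sq_abs s, ← sq_abs z]
        ring
      rw [e] at h1
      nlinarith
    have h6 := pos_of_mul_pos_right h5 (by positivity)
    linarith
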